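/- Let n ≥ 1, let p_param : ℝ^n → [0,∞) be a probability density with respect to Lebesgue measure such that z ↦ I_{n,λ_j}(z) is square-integrable with respect to p_param(z)dz for every 0 ≤ j ≤ ⌊n/2⌋. Let f, f_param : [0,2π] → (0,∞), set C = C_n(f, f_param), and define p^C(z) := det(C)^{−1/2} p_param(F_n^T C^{−1/2} F_n z). Then for all 0 ≤ l, k ≤ ⌊n/2⌋, Cov_{p^C}(I_{n,λ_l}, I_{n,λ_k}) = (f(λ_l) f(λ_k))/(f_param(λ_l) f_param(λ_k)) · Cov_{p_param}(I_{n,λ_l}, I_{n,λ_k}), where for a probability density q, Cov_q(X,Y) := ∫ X(z)Y(z) q(z) dz − (∫ X(z) q(z) dz)(∫ Y(z) q(z) dz). -/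

import Mathlib

open MeasureTheory Matrix Filter

/-- The `j`-th Fourier frequency `λ_j = 2πj/n`. -/
noncomputable def fourierFreq (n j : ℕ) : ℝ := 2 * Real.pi * j / n

/-- The periodogram `I_{n,λ}(z) = (2πn)⁻¹ |∑_{t=1}^n z_t e^{-itλ}|²`. -/
noncomputable def periodogram (n : ℕ) (lam : ℝ) (z : Fin n → ℝ) : ℝ :=
  1 / (2 * Real.pi * n) *
    Complex.normSq (∑ t : Fin n, (z t : ℂ) *
      Complex.exp (-Complex.I * (((t : ℕ) + 1 : ℕ) : ℂ) * (lam : ℂ)))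

/-- The real orthogonal Fourier transform matrix `F_n` with rows
`e_0, c_1, s_1, …, c_N, s_N` (and additionally `e_{n/2}` as last row for `n` even). -/
noncomputable def Fmat (n : ℕ) : Matrix (Fin n) (Fin n) ℝ :=
  Matrix.of fun r t : Fin n =>
    if r.val = 0 then 1 / Real.sqrt n
    else if n % 2 = 0 ∧ r.val = n - 1 then (-1 : ℝ) ^ ((t : ℕ) + 1) / Real.sqrt n
    else if r.val % 2 = 1 then
      Real.sqrt 2 / Real.sqrt n *
        Real.cos (2 * Real.pi * (((r.val + 1) / 2 : ℕ) : ℝ) * (((t : ℕ) + 1 : ℕ) : ℝ) / n)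
    else
      -(Real.sqrt 2 / Real.sqrt n) *
        Real.sin (2 * Real.pi * ((r.val / 2 : ℕ) : ℝ) * (((t : ℕ) + 1 : ℕ) : ℝ) / n)

/-- The diagonal matrix `D_n(f)` with entries `2πf(λ_0), 2πf(λ_1), 2πf(λ_1), …`
matching the row ordering of `F_n`. -/
noncomputable def Dmat (n : ℕ) (f : ℝ → ℝ) : Matrix (Fin n) (Fin n) ℝ :=
  Matrix.diagonal fun r : Fin n => 2 * Real.pi * f (fourierFreq n ((r.val + 1) / 2))

/-- The diagonal correction matrix `C_n(f, f_param)` with entries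
`c(λ_0), c(λ_1), c(λ_1), …` where `c = f/f_param`, matching the row ordering of `F_n`. -/
noncomputable def Cmat (n : ℕ) (f fp : ℝ → ℝ) : Matrix (Fin n) (Fin n) ℝ :=
  Matrix.diagonal fun r : Fin n =>
    f (fourierFreq n ((r.val + 1) / 2)) / fp (fourierFreq n ((r.val + 1) / 2))

/-- Entrywise real power of the diagonal of a matrix: for a diagonal matrix `A` with
positive entries, `diagRPow n A (-(1/2))` is `A^{-1/2}` etc. -/
noncomputable def diagRPow (n : ℕ) (A : Matrix (Fin n) (Fin n) ℝ) (p : ℝ) :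
    Matrix (Fin n) (Fin n) ℝ :=
  Matrix.diagonal fun i => A i i ^ p


/-!
The matrix `F = Fmat n` is orthogonal, and `I_{n,λ_l}(z)` is a multiple of the sum of the squares
of the one or two coordinates of `F z` that belong to the frequency `λ_l`. The matrix
`M = Fᵀ C^{-1/2} F` multiplies each of them by `c(λ_l)^{-1/2}`, so
`I_{n,λ_l} = c(λ_l) I_{n,λ_l} ∘ M`, while substituting `w = M z`, with `det M = det(C)^{-1/2}`,
turns moments of `X ∘ M` under `p^C` into moments of `X` under `p`.
-/

/-- The index `j` of the Fourier frequency `λ_j` to which row `r` of `Fmat n` belongs, the rows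
being ordered as `e_0, c_1, s_1, c_2, s_2, …`. -/
def rowFreqIndex {n : ℕ} (r : Fin n) : ℕ := ((r : ℕ) + 1) / 2

/-- The factor normalizing the cosine and sine rows of `Fmat n` at the frequency `λ_j`. The
condition `n ∣ 2 * j` says that the vector `e_j` is real, so that it is a row without the `√2`. -/
noncomputable def rowAmplitude (n j : ℕ) : ℝ :=
  if n ∣ 2 * j then 1 / Real.sqrt n else Real.sqrt 2 / Real.sqrt n

/-- The phase shift `φ` for which row `r` of `Fmat n` is a multiple of `t ↦ cos (λ t + φ)`: zero for
the rows `e_0`, `c_j` and `e_{n/2}`, and `π / 2` for the rows `s_j`. -/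
noncomputable def rowPhase {n : ℕ} (r : Fin n) : ℝ :=
  if (r : ℕ) = 0 ∨ (r : ℕ) % 2 = 1 then 0 else Real.pi / 2

lemma rowFreqIndex_le_half {n : ℕ} (r : Fin n) : rowFreqIndex r ≤ n / 2 := by
  have := r.isLt
  unfold rowFreqIndex
  omega

lemma dvd_two_mul_iff_of_le_half {n j : ℕ} (hj : j ≤ n / 2) :
    n ∣ 2 * j ↔ j = 0 ∨ 2 * j = n := by
  constructor
  · intro h
    rcases Nat.eq_zero_or_pos j with h0 | hpos
    · exact Or.inl h0
    · exact Or.inr (le_antisymm (by omega) (Nat.le_of_dvd (by omega) h))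
  · rintro (rfl | rfl) <;> simp

lemma natCast_dvd_rowFreqIndex_sub_iff {n : ℕ} (r s : Fin n) :
    (n : ℤ) ∣ (rowFreqIndex r : ℤ) - rowFreqIndex s ↔ rowFreqIndex r = rowFreqIndex s := by
  have hn := r.pos
  have hr := rowFreqIndex_le_half r
  have hs := rowFreqIndex_le_half s
  constructor
  · intro h
    have := Int.eq_zero_of_abs_lt_dvd h (by rw [abs_lt]; omega)
    omega
  · intro h
    simp [h]

lemma natCast_dvd_rowFreqIndex_add_iff {n : ℕ} (r s : Fin n) :
    (n : ℤ) ∣ (rowFreqIndex r : ℤ) + rowFreqIndex s ↔ r = s ∧ n ∣ 2 * rowFreqIndex r := by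
  constructor
  · intro h
    have hdvd : n ∣ rowFreqIndex r + rowFreqIndex s := by exact_mod_cast h
    have hsum : rowFreqIndex r + rowFreqIndex s = 0 ∨ rowFreqIndex r + rowFreqIndex s = n := by
      have hr := rowFreqIndex_le_half r
      have hs := rowFreqIndex_le_half s
      rcases Nat.eq_zero_or_pos (rowFreqIndex r + rowFreqIndex s) with h0 | hpos
      · exact Or.inl h0
      · exact Or.inr (le_antisymm (by omega) (Nat.le_of_dvd hpos hdvd))
    rw [dvd_two_mul_iff_of_le_half (rowFreqIndex_le_half r), Fin.ext_iff]
    have hr := r.isLt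
    have hs := s.isLt
    unfold rowFreqIndex at hsum ⊢
    omega
  · rintro ⟨rfl, h⟩
    rw [← two_mul]
    exact_mod_cast h

lemma rowPhase_eq_zero_of_dvd {n : ℕ} {r : Fin n} (h : n ∣ 2 * rowFreqIndex r) :
    rowPhase r = 0 := by
  rw [dvd_two_mul_iff_of_le_half (rowFreqIndex_le_half r)] at h
  have := r.isLt
  unfold rowFreqIndex at h
  exact if_pos (by omega)

lemma rowAmplitude_ne_zero (n j : ℕ) [NeZero n] : rowAmplitude n j ≠ 0 := by
  have : (0 : ℝ) < n := Nat.cast_pos.2 (NeZero.pos n)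
  unfold rowAmplitude
  split_ifs <;> positivity

lemma sum_cos_two_pi_mul_div (n : ℕ) [NeZero n] (m : ℤ) (φ : ℝ) :
    ∑ t : Fin n, Real.cos (2 * Real.pi * m / n * ((t : ℕ) + 1) + φ) =
      if (n : ℤ) ∣ m then n * Real.cos φ else 0 := by
  have hn : (n : ℝ) ≠ 0 := NeZero.ne _
  split_ifs with h
  · obtain ⟨q, rfl⟩ := h
    have hterm (t : Fin n) :
        Real.cos (2 * Real.pi * ((n * q : ℤ) : ℝ) / n * ((t : ℕ) + 1) + φ) = Real.cos φ := by
      rw [← Real.cos_add_int_mul_two_pi φ (q * ((t : ℕ) + 1))]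
      congr 1
      push_cast
      field_simp
      ring
    simp only [hterm, Finset.sum_const, Finset.card_univ, Fintype.card_fin, nsmul_eq_mul]
  · have hne (k : ℤ) : 2 * Real.pi * m / n ≠ k * (2 * Real.pi) := by
      intro hk
      refine h ⟨k, ?_⟩
      have hmul : (m : ℝ) = n * k := by
        field_simp at hk
        linarith
      exact_mod_cast hmul
    have hsin : Real.sin (n * (2 * Real.pi * m / n) / 2) = 0 := by
      rw [← Real.sin_int_mul_pi m]
      congr 1
      field_simp
    have hsum := Real.sum_cos n hne (2 * Real.pi * m / n + φ)
    rw [hsin, zero_mul, zero_div, ← Fin.sum_univ_eq_sum_range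
      (fun t => Real.cos (2 * Real.pi * m / n * t + (2 * Real.pi * m / n + φ)))] at hsum
    rw [← hsum]
    exact Finset.sum_congr rfl fun t _ => by ring_nf

lemma fourierFreq_mul_of_two_mul_eq {n j : ℕ} [NeZero n] (h : 2 * j = n) (x : ℝ) :
    fourierFreq n j * x = x * Real.pi := by
  have hn : (n : ℝ) ≠ 0 := NeZero.ne _
  have hj : (2 * j : ℝ) = n := by exact_mod_cast h
  unfold fourierFreq
  field_simp
  linear_combination x * hj

lemma Fmat_apply_eq_cos {n : ℕ} (r t : Fin n) :
    Fmat n r t = rowAmplitude n (rowFreqIndex r) *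
      Real.cos (fourierFreq n (rowFreqIndex r) * ((t : ℕ) + 1) + rowPhase r) := by
  have : NeZero n := ⟨r.pos.ne'⟩
  have hr := r.isLt
  have hdvd := dvd_two_mul_iff_of_le_half (rowFreqIndex_le_half r)
  simp only [Fmat, Matrix.of_apply]
  split_ifs with h0 hlast hodd
  · rw [rowPhase, if_pos (Or.inl h0), rowFreqIndex, h0]
    simp [rowAmplitude, fourierFreq]
  · have hhalf : 2 * rowFreqIndex r = n := by unfold rowFreqIndex; omega
    have hreal := hdvd.2 (Or.inr hhalf)
    rw [rowPhase_eq_zero_of_dvd hreal, rowAmplitude, if_pos hreal,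
      fourierFreq_mul_of_two_mul_eq hhalf, add_zero, ← Nat.cast_add_one, Real.cos_nat_mul_pi]
    ring
  all_goals
    have hreal : ¬ n ∣ 2 * rowFreqIndex r := by
      rw [hdvd]
      unfold rowFreqIndex
      omega
    rw [rowAmplitude, if_neg hreal, rowPhase, fourierFreq]
  · rw [if_pos (Or.inr hodd), rowFreqIndex]
    push_cast
    ring_nf
  · have hindex : rowFreqIndex r = (r : ℕ) / 2 := by unfold rowFreqIndex; omega
    rw [if_neg (by tauto), Real.cos_add_pi_div_two, hindex]
    push_cast
    ring_nf

lemma Fmat_mul_transpose_apply {n : ℕ} (r s : Fin n) :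
    (Fmat n * (Fmat n)ᵀ) r s =
      rowAmplitude n (rowFreqIndex r) * rowAmplitude n (rowFreqIndex s) / 2 *
        ((if rowFreqIndex r = rowFreqIndex s then n * Real.cos (rowPhase r - rowPhase s) else 0) +
          if r = s ∧ n ∣ 2 * rowFreqIndex r then n * Real.cos (rowPhase r + rowPhase s)
          else 0) := by
  have : NeZero n := ⟨r.pos.ne'⟩
  simp only [← natCast_dvd_rowFreqIndex_sub_iff, ← natCast_dvd_rowFreqIndex_add_iff,
    ← sum_cos_two_pi_mul_div, ← Finset.sum_add_distrib, Matrix.mul_apply, Finset.mul_sum,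
    Matrix.transpose_apply, Fmat_apply_eq_cos]
  refine Finset.sum_congr rfl fun t _ => ?_
  set x := fourierFreq n (rowFreqIndex r) * ((t : ℕ) + 1) + rowPhase r with hx
  set y := fourierFreq n (rowFreqIndex s) * ((t : ℕ) + 1) + rowPhase s with hy
  have hsub : 2 * Real.pi * ((rowFreqIndex r - rowFreqIndex s : ℤ) : ℝ) / n * ((t : ℕ) + 1) +
      (rowPhase r - rowPhase s) = x - y := by
    rw [hx, hy, fourierFreq, fourierFreq]
    push_cast
    ring
  have hadd : 2 * Real.pi * ((rowFreqIndex r + rowFreqIndex s : ℤ) : ℝ) / n * ((t : ℕ) + 1) +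
      (rowPhase r + rowPhase s) = x + y := by
    rw [hx, hy, fourierFreq, fourierFreq]
    push_cast
    ring
  rw [hsub, hadd, Real.cos_sub x y, Real.cos_add x y]
  ring

lemma cos_rowPhase_sub_eq_zero {n : ℕ} {r s : Fin n} (hne : r ≠ s)
    (h : rowFreqIndex r = rowFreqIndex s) : Real.cos (rowPhase r - rowPhase s) = 0 := by
  have hval : (r : ℕ) ≠ s := Fin.val_ne_of_ne hne
  unfold rowFreqIndex at h
  unfold rowPhase
  by_cases hodd : (r : ℕ) % 2 = 1
  · rw [if_pos (Or.inr hodd), if_neg (by omega), zero_sub, Real.cos_neg, Real.cos_pi_div_two]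
  · rw [if_neg (by omega), if_pos (by omega), sub_zero, Real.cos_pi_div_two]

theorem Fmat_mul_transpose (n : ℕ) : Fmat n * (Fmat n)ᵀ = 1 := by
  ext r s
  have hn : (0 : ℝ) < n := Nat.cast_pos.2 r.pos
  rw [Fmat_mul_transpose_apply]
  rcases eq_or_ne r s with rfl | hne
  · rw [Matrix.one_apply_eq, if_pos rfl, sub_self, Real.cos_zero, rowAmplitude]
    by_cases hreal : n ∣ 2 * rowFreqIndex r
    · simp only [hreal, rowPhase_eq_zero_of_dvd hreal, and_self, if_true, add_zero, Real.cos_zero]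
      field_simp
      rw [Real.sq_sqrt hn.le]
      ring
    · simp only [hreal, and_false, if_false, add_zero]
      field_simp
      rw [Real.sq_sqrt hn.le, Real.sq_sqrt zero_le_two]
      ring
  · rw [Matrix.one_apply_ne hne, if_neg (c := r = s ∧ _) fun h => hne h.1]
    split_ifs with h
    · rw [cos_rowPhase_sub_eq_zero hne h]
      ring
    · ring

lemma Fmat_mulVec_apply {n : ℕ} (z : Fin n → ℝ) (r : Fin n) :
    (Fmat n *ᵥ z) r = rowAmplitude n (rowFreqIndex r) *
      ∑ t : Fin n, z t *
        Real.cos (fourierFreq n (rowFreqIndex r) * ((t : ℕ) + 1) + rowPhase r) := by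
  rw [Matrix.mulVec, dotProduct, Finset.mul_sum]
  exact Finset.sum_congr rfl fun t _ => by rw [Fmat_apply_eq_cos]; ring

lemma periodogram_eq_cos_sin (n : ℕ) (lam : ℝ) (z : Fin n → ℝ) :
    periodogram n lam z = 1 / (2 * Real.pi * n) *
      ((∑ t : Fin n, z t * Real.cos (lam * ((t : ℕ) + 1))) ^ 2 +
        (∑ t : Fin n, z t * Real.sin (lam * ((t : ℕ) + 1))) ^ 2) := by
  have hexp (t : Fin n) : Complex.exp (-Complex.I * (((t : ℕ) + 1 : ℕ) : ℂ) * (lam : ℂ)) =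
      Complex.exp ((-(lam * ((t : ℕ) + 1)) : ℝ) * Complex.I) := by
    congr 1
    push_cast
    ring
  simp only [periodogram, Complex.normSq_apply, Complex.re_sum, Complex.im_sum, hexp,
    Complex.re_ofReal_mul, Complex.im_ofReal_mul, Complex.exp_ofReal_mul_I_re,
    Complex.exp_ofReal_mul_I_im, Real.cos_neg, Real.sin_neg, mul_neg, Finset.sum_neg_distrib]
  ring

lemma sin_fourierFreq_mul_eq_zero {n j : ℕ} [NeZero n] (h : n ∣ 2 * j) (t : ℕ) :
    Real.sin (fourierFreq n j * t) = 0 := by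
  obtain ⟨q, hq⟩ := h
  have hn : (n : ℝ) ≠ 0 := NeZero.ne _
  have hj : (2 * j : ℝ) = n * q := by exact_mod_cast hq
  rw [← Real.sin_nat_mul_pi (q * t), fourierFreq]
  congr 1
  push_cast
  field_simp
  linear_combination t * hj

lemma exists_filter_rowFreqIndex_eq_singleton {n l : ℕ} [NeZero n] (hl : l ≤ n / 2)
    (hreal : n ∣ 2 * l) :
    ∃ r₀ : Fin n, rowPhase r₀ = 0 ∧
      ({r : Fin n | rowFreqIndex r = l} : Finset (Fin n)) = {r₀} := by
  have hn := NeZero.pos n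
  have hreal' := (dvd_two_mul_iff_of_le_half hl).1 hreal
  -- For `l = 0` the subtraction truncates to the row `0`, as it should.
  refine ⟨⟨2 * l - 1, by omega⟩, if_pos (by simp only; omega), ?_⟩
  ext r
  simp only [Finset.mem_filter_univ, Finset.mem_singleton, Fin.ext_iff]
  unfold rowFreqIndex
  omega

lemma exists_filter_rowFreqIndex_eq_pair {n l : ℕ} (hl : l ≤ n / 2) (hreal : ¬ n ∣ 2 * l) :
    ∃ r₁ r₂ : Fin n, r₁ ≠ r₂ ∧ rowPhase r₁ = 0 ∧ rowPhase r₂ = Real.pi / 2 ∧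
      ({r : Fin n | rowFreqIndex r = l} : Finset (Fin n)) = {r₁, r₂} := by
  rw [dvd_two_mul_iff_of_le_half hl] at hreal
  refine ⟨⟨2 * l - 1, by omega⟩, ⟨2 * l, by omega⟩, Fin.ne_of_val_ne (by simp only; omega),
    if_pos (by simp only; omega), if_neg (by simp only; omega), ?_⟩
  ext r
  simp only [Finset.mem_filter_univ, Finset.mem_insert, Finset.mem_singleton, Fin.ext_iff]
  unfold rowFreqIndex
  omega

lemma periodogram_fourierFreq_eq_sum_sq {n l : ℕ} [NeZero n] (hl : l ≤ n / 2) (z : Fin n → ℝ) :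
    periodogram n (fourierFreq n l) z = 1 / (2 * Real.pi * n * rowAmplitude n l ^ 2) *
      ∑ r : Fin n with rowFreqIndex r = l, (Fmat n *ᵥ z) r ^ 2 := by
  have ha := rowAmplitude_ne_zero n l
  have hmulVec {r : Fin n} (hr : r ∈ ({r | rowFreqIndex r = l} : Finset (Fin n))) :
      (Fmat n *ᵥ z) r = rowAmplitude n l *
        ∑ t : Fin n, z t * Real.cos (fourierFreq n l * ((t : ℕ) + 1) + rowPhase r) := by
    rw [Fmat_mulVec_apply, (Finset.mem_filter.1 hr).2]
  rw [periodogram_eq_cos_sin]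
  by_cases hreal : n ∣ 2 * l
  · obtain ⟨r₀, hphase, hrows⟩ := exists_filter_rowFreqIndex_eq_singleton hl hreal
    have hsin (t : Fin n) : Real.sin (fourierFreq n l * ((t : ℕ) + 1)) = 0 := by
      exact_mod_cast sin_fourierFreq_mul_eq_zero hreal (t + 1)
    rw [hrows, Finset.sum_singleton, hmulVec (by simp [hrows])]
    simp only [hphase, add_zero, hsin, mul_zero, Finset.sum_const_zero]
    field_simp
    ring
  · obtain ⟨r₁, r₂, hne, hphase₁, hphase₂, hrows⟩ := exists_filter_rowFreqIndex_eq_pair hl hreal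
    rw [hrows, Finset.sum_pair hne, hmulVec (by simp [hrows]), hmulVec (by simp [hrows])]
    simp only [hphase₁, hphase₂, add_zero, Real.cos_add_pi_div_two, mul_neg,
      Finset.sum_neg_distrib]
    field_simp

lemma fourierFreq_mem_Icc {n j : ℕ} (hj : j ≤ n) :
    fourierFreq n j ∈ Set.Icc 0 (2 * Real.pi) := by
  refine ⟨by unfold fourierFreq; positivity, ?_⟩
  rw [fourierFreq, mul_div_assoc]
  exact mul_le_of_le_one_right Real.two_pi_pos.le
    (div_le_one_of_le₀ (Nat.cast_le.2 hj) (Nat.cast_nonneg n))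

lemma det_diagRPow_diagonal {n : ℕ} {c : Fin n → ℝ} (hc : ∀ i, 0 ≤ c i) (s : ℝ) :
    (diagRPow n (Matrix.diagonal c) s).det = (Matrix.diagonal c).det ^ s := by
  simp only [diagRPow, Matrix.diagonal_apply_eq, Matrix.det_diagonal]
  exact Real.finsetProd_rpow _ _ (fun i _ => hc i) s

/-- The matrix `F_nᵀ C_n(f, f_param)^{-1/2} F_n` through which the corrected likelihood reads the
data. -/
noncomputable def correctionMatrix (n : ℕ) (f fp : ℝ → ℝ) : Matrix (Fin n) (Fin n) ℝ :=
  (Fmat n)ᵀ * diagRPow n (Cmat n f fp) (-(1 / 2)) * Fmat n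

/-- The corrected likelihood `p^C(z) = det(C)^{-1/2} p(F_nᵀ C^{-1/2} F_n z)`. -/
noncomputable def correctedDensity (n : ℕ) (f fp : ℝ → ℝ) (p : (Fin n → ℝ) → ℝ)
    (z : Fin n → ℝ) : ℝ :=
  (Cmat n f fp).det ^ (-(1 : ℝ) / 2) * p (correctionMatrix n f fp *ᵥ z)

/-- The covariance `∫ X Y q - (∫ X q) (∫ Y q)` of `X` and `Y` under the density `q`. -/
noncomputable def densityCov {α : Type*} [MeasureSpace α] (q X Y : α → ℝ) : ℝ :=
  (∫ z, X z * Y z * q z) - (∫ z, X z * q z) * ∫ z, Y z * q z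

lemma densityCov_const_mul {α : Type*} [MeasureSpace α] (q X Y : α → ℝ) (a b : ℝ) :
    densityCov q (fun z => a * X z) (fun z => b * Y z) = a * b * densityCov q X Y := by
  simp only [densityCov, mul_mul_mul_comm a _ b, mul_assoc a, mul_assoc b, integral_const_mul]
  ring

lemma Fmat_mulVec_correctionMatrix_mulVec {n : ℕ} (f fp : ℝ → ℝ) (z : Fin n → ℝ) (r : Fin n) :
    (Fmat n *ᵥ (correctionMatrix n f fp *ᵥ z)) r =
      (f (fourierFreq n (rowFreqIndex r)) / fp (fourierFreq n (rowFreqIndex r))) ^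
        (-(1 / 2) : ℝ) * (Fmat n *ᵥ z) r := by
  rw [Matrix.mulVec_mulVec, correctionMatrix, Matrix.mul_assoc, ← Matrix.mul_assoc,
    Fmat_mul_transpose, Matrix.one_mul, ← Matrix.mulVec_mulVec, diagRPow, Matrix.mulVec_diagonal,
    Cmat, Matrix.diagonal_apply_eq, rowFreqIndex]

theorem periodogram_eq_mul_periodogram_correctionMatrix_mulVec {n l : ℕ} [NeZero n] {f fp : ℝ → ℝ}
    (hl : l ≤ n / 2) (hc : 0 < f (fourierFreq n l) / fp (fourierFreq n l)) (z : Fin n → ℝ) :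
    periodogram n (fourierFreq n l) z = f (fourierFreq n l) / fp (fourierFreq n l) *
      periodogram n (fourierFreq n l) (correctionMatrix n f fp *ᵥ z) := by
  set c := f (fourierFreq n l) / fp (fourierFreq n l) with hcdef
  have hrow (r : Fin n) (hr : r ∈ ({r | rowFreqIndex r = l} : Finset (Fin n))) :
      (Fmat n *ᵥ z) r ^ 2 = c * (Fmat n *ᵥ (correctionMatrix n f fp *ᵥ z)) r ^ 2 := by
    have hcsq : c * (c ^ (-(1 / 2) : ℝ)) ^ 2 = 1 := by
      rw [← Real.rpow_natCast, ← Real.rpow_mul hc.le]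
      norm_num [Real.rpow_neg_one, hc.ne']
    rw [Fmat_mulVec_correctionMatrix_mulVec, (Finset.mem_filter.1 hr).2, ← hcdef]
    linear_combination -(Fmat n *ᵥ z) r ^ 2 * hcsq
  rw [periodogram_fourierFreq_eq_sum_sq hl, periodogram_fourierFreq_eq_sum_sq hl,
    Finset.sum_congr rfl hrow, ← Finset.mul_sum, mul_left_comm]

section LinearChangeOfVariables

variable {E F : Type*} [NormedAddCommGroup E] [NormedSpace ℝ E] [MeasurableSpace E] [BorelSpace E]
  [FiniteDimensional ℝ E] [NormedAddCommGroup F] (μ : Measure E) [μ.IsAddHaarMeasure]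

lemma measurableEmbedding_of_linearMap_det_ne_zero {L : E →ₗ[ℝ] E} (hL : LinearMap.det L ≠ 0) :
    MeasurableEmbedding L :=
  (LinearMap.equivOfDetNeZero L hL).toContinuousLinearEquiv.toHomeomorph.measurableEmbedding

lemma integrable_comp_linearMap_iff (g : E → F) {L : E →ₗ[ℝ] E} (hL : LinearMap.det L ≠ 0) :
    Integrable (fun x => g (L x)) μ ↔ Integrable g μ := by
  have hmap := (measurableEmbedding_of_linearMap_det_ne_zero hL).integrable_map_iff
    (μ := μ) (g := g)
  rw [Measure.map_linearMap_addHaar_eq_smul_addHaar μ hL,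
    integrable_smul_measure (by simpa using hL) ENNReal.ofReal_ne_top] at hmap
  exact hmap.symm

lemma integral_comp_linearMap [NormedSpace ℝ F] (g : E → F) {L : E →ₗ[ℝ] E}
    (hL : LinearMap.det L ≠ 0) :
    ∫ x, g (L x) ∂μ = |(LinearMap.det L)⁻¹| • ∫ x, g x ∂μ := by
  rw [← (measurableEmbedding_of_linearMap_det_ne_zero hL).integral_map,
    Measure.map_linearMap_addHaar_eq_smul_addHaar μ hL, integral_smul_measure,
    ENNReal.toReal_ofReal (abs_nonneg _)]

end LinearChangeOfVariables

section CorrectedDensity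

variable {n : ℕ} {f fp : ℝ → ℝ}
  (hc : ∀ j ≤ n / 2, 0 < f (fourierFreq n j) / fp (fourierFreq n j))

include hc

lemma det_Cmat_pos : 0 < (Cmat n f fp).det := by
  rw [Cmat, Matrix.det_diagonal]
  exact Finset.prod_pos fun r _ => hc _ (rowFreqIndex_le_half r)

lemma det_correctionMatrix :
    (correctionMatrix n f fp).det = (Cmat n f fp).det ^ (-(1 : ℝ) / 2) := by
  have horth := Fmat_mul_transpose n
  rw [correctionMatrix, Matrix.det_conj_of_mul_eq_one (mul_eq_one_comm.1 horth) horth, neg_div]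
  exact det_diagRPow_diagonal (fun r => (hc _ (rowFreqIndex_le_half r)).le) _

lemma det_correctionMatrix_pos : 0 < (correctionMatrix n f fp).det := by
  rw [det_correctionMatrix hc]
  exact Real.rpow_pos_of_pos (det_Cmat_pos hc) _

lemma det_toLin'_correctionMatrix_ne_zero :
    LinearMap.det (Matrix.toLin' (correctionMatrix n f fp)) ≠ 0 := by
  rw [LinearMap.det_toLin']
  exact (det_correctionMatrix_pos hc).ne'

lemma integral_comp_correctionMatrix_mul_correctedDensity (p X : (Fin n → ℝ) → ℝ) :
    ∫ z, X (correctionMatrix n f fp *ᵥ z) * correctedDensity n f fp p z = ∫ z, X z * p z := by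
  have hdet := det_correctionMatrix_pos hc
  have hsubst := integral_comp_linearMap volume (fun z => X z * p z)
    (det_toLin'_correctionMatrix_ne_zero hc)
  simp only [Matrix.toLin'_apply, LinearMap.det_toLin', abs_of_pos (inv_pos.2 hdet),
    smul_eq_mul] at hsubst
  simp only [correctedDensity, ← det_correctionMatrix hc,
    mul_left_comm _ (correctionMatrix n f fp).det, integral_const_mul, hsubst]
  exact mul_inv_cancel_left₀ hdet.ne' _

lemma integrable_comp_correctionMatrix_mul_correctedDensity_iff (p X : (Fin n → ℝ) → ℝ) :
    Integrable (fun z => X (correctionMatrix n f fp *ᵥ z) * correctedDensity n f fp p z) ↔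
      Integrable fun z => X z * p z := by
  simp only [correctedDensity, ← det_correctionMatrix hc,
    mul_left_comm _ (correctionMatrix n f fp).det]
  rw [integrable_const_mul_iff (det_correctionMatrix_pos hc).ne'.isUnit]
  exact integrable_comp_linearMap_iff volume (fun z => X z * p z)
    (det_toLin'_correctionMatrix_ne_zero hc)

lemma integrable_correctedDensity_iff (p : (Fin n → ℝ) → ℝ) :
    Integrable (correctedDensity n f fp p) ↔ Integrable p := by
  simpa only [one_mul] using
    integrable_comp_correctionMatrix_mul_correctedDensity_iff hc p fun _ => 1

lemma densityCov_correctedDensity_comp (p X Y : (Fin n → ℝ) → ℝ) :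
    densityCov (correctedDensity n f fp p) (fun z => X (correctionMatrix n f fp *ᵥ z))
      (fun z => Y (correctionMatrix n f fp *ᵥ z)) = densityCov p X Y := by
  rw [densityCov, integral_comp_correctionMatrix_mul_correctedDensity hc p fun z => X z * Y z,
    integral_comp_correctionMatrix_mul_correctedDensity hc,
    integral_comp_correctionMatrix_mul_correctedDensity hc, densityCov]

lemma integrable_periodogram_sq_mul_correctedDensity [NeZero n] {p : (Fin n → ℝ) → ℝ} {j : ℕ}
    (hj : j ≤ n / 2) (hsq : Integrable fun z => periodogram n (fourierFreq n j) z ^ 2 * p z) :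
    Integrable fun z => periodogram n (fourierFreq n j) z ^ 2 * correctedDensity n f fp p z := by
  rw [funext (periodogram_eq_mul_periodogram_correctionMatrix_mulVec hj (hc j hj))]
  simp only [mul_pow, mul_assoc]
  exact ((integrable_comp_correctionMatrix_mul_correctedDensity_iff hc p
    fun z => periodogram n (fourierFreq n j) z ^ 2).2 hsq).const_mul _

lemma densityCov_correctedDensity_periodogram [NeZero n] (p : (Fin n → ℝ) → ℝ) {l k : ℕ}
    (hl : l ≤ n / 2) (hk : k ≤ n / 2) :
    densityCov (correctedDensity n f fp p) (periodogram n (fourierFreq n l))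
        (periodogram n (fourierFreq n k)) =
      f (fourierFreq n l) * f (fourierFreq n k) / (fp (fourierFreq n l) * fp (fourierFreq n k)) *
        densityCov p (periodogram n (fourierFreq n l)) (periodogram n (fourierFreq n k)) := by
  conv_lhs => rw [funext (periodogram_eq_mul_periodogram_correctionMatrix_mulVec hl (hc l hl)),
    funext (periodogram_eq_mul_periodogram_correctionMatrix_mulVec hk (hc k hk))]
  rw [densityCov_const_mul, densityCov_correctedDensity_comp hc, div_mul_div_comm]

end CorrectedDensity

/-- The integrability conclusions make sure that the integrals defining the covariance under
`p^C` are not junk values. -/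
theorem statement8_general (n : ℕ) [NeZero n] (p : (Fin n → ℝ) → ℝ) (hp_int : Integrable p)
    (f fp : ℝ → ℝ) (hc : ∀ j ≤ n / 2, 0 < f (fourierFreq n j) / fp (fourierFreq n j))
    (hsq : ∀ j ≤ n / 2, Integrable fun z => periodogram n (fourierFreq n j) z ^ 2 * p z)
    (l k : ℕ) (hl : l ≤ n / 2) (hk : k ≤ n / 2) :
    Integrable (correctedDensity n f fp p) ∧
    (∀ j ≤ n / 2, Integrable fun z =>
      periodogram n (fourierFreq n j) z ^ 2 * correctedDensity n f fp p z) ∧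
    densityCov (correctedDensity n f fp p) (periodogram n (fourierFreq n l))
        (periodogram n (fourierFreq n k)) =
      f (fourierFreq n l) * f (fourierFreq n k) / (fp (fourierFreq n l) * fp (fourierFreq n k)) *
        densityCov p (periodogram n (fourierFreq n l)) (periodogram n (fourierFreq n k)) :=
  ⟨(integrable_correctedDensity_iff hc p).2 hp_int,
    fun j hj => integrable_periodogram_sq_mul_correctedDensity hc hj (hsq j hj),
    densityCov_correctedDensity_periodogram hc p hl hk⟩

/-- covariance scaling identity of the periodogram ordinates under the
corrected likelihood. -/
theorem statement8 (n : ℕ) (hn : 1 ≤ n)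
    (p : (Fin n → ℝ) → ℝ) (hp_meas : Measurable p) (hp_nonneg : ∀ z, 0 ≤ p z)
    (hp_int : Integrable p) (hp1 : ∫ z, p z = 1)
    (f fp : ℝ → ℝ)
    (hf : ∀ x ∈ Set.Icc 0 (2 * Real.pi), 0 < f x)
    (hfp : ∀ x ∈ Set.Icc 0 (2 * Real.pi), 0 < fp x)
    (hsq : ∀ j : ℕ, j ≤ n / 2 →
      Integrable (fun z => periodogram n (fourierFreq n j) z ^ 2 * p z))
    (l k : ℕ) (hl : l ≤ n / 2) (hk : k ≤ n / 2) :
    (let pC : (Fin n → ℝ) → ℝ := fun z =>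
      (Cmat n f fp).det ^ (-(1 : ℝ) / 2) *
        p (((Fmat n)ᵀ * diagRPow n (Cmat n f fp) (-(1 / 2)) * Fmat n).mulVec z)
    (∫ z, periodogram n (fourierFreq n l) z * periodogram n (fourierFreq n k) z * pC z) -
      (∫ z, periodogram n (fourierFreq n l) z * pC z) *
        (∫ z, periodogram n (fourierFreq n k) z * pC z)) =
    f (fourierFreq n l) * f (fourierFreq n k) /
        (fp (fourierFreq n l) * fp (fourierFreq n k)) *
      ((∫ z, periodogram n (fourierFreq n l) z * periodogram n (fourierFreq n k) z * p z) -
        (∫ z, periodogram n (fourierFreq n l) z * p z) *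
          (∫ z, periodogram n (fourierFreq n k) z * p z)) := by
  have : NeZero n := ⟨by omega⟩
  exact (statement8_general n p hp_int f fp (fun j hj => div_pos
    (hf _ (fourierFreq_mem_Icc (by omega))) (hfp _ (fourierFreq_mem_Icc (by omega))))
    hsq l k hl hk).2.2
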